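/- Identify F₃ = {−1,0,1} and index the nine points of F₃ × F₃ in the order (−1,−1), (−1,0), (−1,1), (0,−1), (0,0), (0,1), (1,−1), (1,0), (1,1), assigning them respectively the columns of the 5×9 matrix over F₃ whose rows are (1,0,0,0,0,1,1,1,1), (0,1,0,0,0,1,−1,−1,1), (0,0,1,0,0,1,−1,1,0), (0,0,0,1,0,1,1,0,−1), (0,0,0,0,1,1,0,−1,−1). Let 𝒞 = {A_i ∪ B_j : i,j ∈ F₃} ∪ {C_i ∪ D_j : i,j ∈ F₃}. Then every 4-element subset of columns is linearly independent over F₃, and a 5-element set S of points has linearly dependent columns if and only if S ∈ 𝒞. Consequently, these columns form an F₃-linear representation of the sparse paving matroid of rank 5 on F₃ × F₃ with circuit-hyperplane family 𝒞. -/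

import Mathlib

open Finset

/-- The points of the affine plane over `F₃`. -/
abbrev Pt := ZMod 3 × ZMod 3

/-- The horizontal line `A_i = {(x, i) : x ∈ F₃}`. -/
def lineA (i : ZMod 3) : Finset Pt := Finset.univ.image (fun x => (x, i))

/-- The vertical line `B_j = {(j, y) : y ∈ F₃}`. -/
def lineB (j : ZMod 3) : Finset Pt := Finset.univ.image (fun y => (j, y))

/-- The line `C_i = {(x, y) : x − y = i}`. -/
def lineC (i : ZMod 3) : Finset Pt := Finset.univ.filter (fun p => p.1 - p.2 = i)

/-- The line `D_j = {(x, y) : x + y = j}`. -/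
def lineD (j : ZMod 3) : Finset Pt := Finset.univ.filter (fun p => p.1 + p.2 = j)

/-- The family `𝒞 = {A_i ∪ B_j} ∪ {C_i ∪ D_j}` of circuit-hyperplanes of `T₃²`. -/
def bigCH : Finset (Finset Pt) :=
  (Finset.univ.image (fun p : ZMod 3 × ZMod 3 => lineA p.1 ∪ lineB p.2)) ∪
  (Finset.univ.image (fun p : ZMod 3 × ZMod 3 => lineC p.1 ∪ lineD p.2))

/-- The rank function of the sparse paving matroid of rank 5 on `F₃ × F₃` with
circuit-hyperplane family `bigCH`. -/
def bigRank (X : Finset Pt) : ℕ := if X ∈ bigCH then 4 else min X.card 5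

/-- The columns of the given 5×9 matrix over `F₃`, indexed by the points of `F₃ × F₃`
in the order `(−1,−1), (−1,0), (−1,1), (0,−1), (0,0), (0,1), (1,−1), (1,0), (1,1)`. -/
def col : Pt → Fin 5 → ZMod 3 := fun p =>
  if p = (-1, -1) then ![1, 0, 0, 0, 0]
  else if p = (-1, 0) then ![0, 1, 0, 0, 0]
  else if p = (-1, 1) then ![0, 0, 1, 0, 0]
  else if p = (0, -1) then ![0, 0, 0, 1, 0]
  else if p = (0, 0) then ![0, 0, 0, 0, 1]
  else if p = (0, 1) then ![1, 1, 1, 1, 1]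
  else if p = (1, -1) then ![1, -1, -1, 1, 0]
  else if p = (1, 0) then ![1, -1, 1, 0, -1]
  else ![1, 1, 0, -1, -1]

/-- The kernel word of the matrix with prescribed last four coordinates. -/
def kw (x y z w : ZMod 3) : Pt → ZMod 3 := fun p =>
  if p = (-1, -1) then -(x + y + z + w)
  else if p = (-1, 0) then -(x - y - z + w)
  else if p = (-1, 1) then -(x - y + z)
  else if p = (0, -1) then -(x + y - w)
  else if p = (0, 0) then -(x - z - w)
  else if p = (0, 1) then x
  else if p = (1, -1) then y
  else if p = (1, 0) then z
  else w

/-- The support of a word. -/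
def wsupp (c : Pt → ZMod 3) : Finset Pt := Finset.univ.filter (fun p => c p ≠ 0)

lemma sum_pt {M : Type*} [AddCommMonoid M] (f : Pt → M) : ∑ p, f p =
    f (-1,-1) + f (-1,0) + f (-1,1) + f (0,-1) + f (0,0) + f (0,1)
      + f (1,-1) + f (1,0) + f (1,1) := by
  have h : (Finset.univ : Finset Pt) =
    {(-1,-1), (-1,0), (-1,1), (0,-1), (0,0), (0,1), (1,-1), (1,0), (1,1)} := by decide
  rw [h]
  repeat rw [Finset.sum_insert (by decide)]
  rw [Finset.sum_singleton]
  simp only [add_assoc]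

lemma kw_kernel (x y z w : ZMod 3) : ∑ p, kw x y z w p • col p = 0 := by
  rw [sum_pt]
  revert x y z w
  decide +kernel

lemma kw_of_kernel (c : Pt → ZMod 3) (h : ∑ p, c p • col p = 0) :
    c = kw (c (0,1)) (c (1,-1)) (c (1,0)) (c (1,1)) := by
  rw [sum_pt] at h
  have e1 : col (-1,-1) = ![1, 0, 0, 0, 0] := by decide
  have e2 : col (-1,0) = ![0, 1, 0, 0, 0] := by decide
  have e3 : col (-1,1) = ![0, 0, 1, 0, 0] := by decide
  have e4 : col (0,-1) = ![0, 0, 0, 1, 0] := by decide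
  have e5 : col (0,0) = ![0, 0, 0, 0, 1] := by decide
  have e6 : col (0,1) = ![1, 1, 1, 1, 1] := by decide
  have e7 : col (1,-1) = ![1, -1, -1, 1, 0] := by decide
  have e8 : col (1,0) = ![1, -1, 1, 0, -1] := by decide
  have e9 : col (1,1) = ![1, 1, 0, -1, -1] := by decide
  rw [e1, e2, e3, e4, e5, e6, e7, e8, e9] at h
  have h0 := congrFun h 0
  have h1 := congrFun h 1
  have h2 := congrFun h 2
  have h3 := congrFun h 3
  have h4 := congrFun h 4
  simp at h0 h1 h2 h3 h4
  have hp : ∀ p : Pt, p = (-1,-1) ∨ p = (-1,0) ∨ p = (-1,1) ∨ p = (0,-1) ∨ p = (0,0) ∨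
    p = (0,1) ∨ p = (1,-1) ∨ p = (1,0) ∨ p = (1,1) := by decide
  funext p
  rcases hp p with rfl | rfl | rfl | rfl | rfl | rfl | rfl | rfl | rfl
  · change _ = -(_ + _ + _ + _); linear_combination h0
  · change _ = -(_ - _ - _ + _); linear_combination h1
  · change _ = -(_ - _ + _); linear_combination h2
  · change _ = -(_ + _ - _); linear_combination h3
  · change _ = -(_ - _ - _); linear_combination h4
  · rfl
  · rfl
  · rfl
  · rfl

lemma kw_supp : ∀ x y z w : ZMod 3, wsupp (kw x y z w) = ∅ ∨ 6 ≤ (wsupp (kw x y z w)).card ∨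
    wsupp (kw x y z w) ∈ bigCH := by
  decide +kernel

lemma bigCH_word : ∀ S ∈ bigCH, ∃ x y z w : ZMod 3, wsupp (kw x y z w) = S := by
  decide +kernel

lemma bigCH_card : ∀ S ∈ bigCH, S.card = 5 := by
  decide +kernel

lemma bigCH_inter : ∀ S ∈ bigCH, ∀ T ∈ bigCH, S ≠ T → (S ∩ T).card ≤ 3 := by
  decide +kernel

lemma supp_kernel (c : Pt → ZMod 3) (h : ∑ p, c p • col p = 0) :
    wsupp c = ∅ ∨ 6 ≤ (wsupp c).card ∨ wsupp c ∈ bigCH := by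
  rw [kw_of_kernel c h]
  exact kw_supp _ _ _ _

lemma indep_of (S : Finset Pt) (hS : S.card ≤ 5) (hC : S ∉ bigCH) :
    LinearIndepOn (ZMod 3) col (S : Set Pt) := by
  rw [linearIndepOn_finset_iff]
  intro f hf
  set c : Pt → ZMod 3 := fun p => if p ∈ S then f p else 0 with hc
  have hk : ∑ p, c p • col p = 0 := by
    rw [← hf]
    simp [hc, ite_smul, Finset.sum_ite_mem]
  have hsub : wsupp c ⊆ S := by
    intro p hp
    by_contra hn
    simp [wsupp, hc, hn] at hp
  rcases supp_kernel c hk with h | h | h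
  · intro i hi
    by_contra hn
    have : i ∈ wsupp c := by simp [wsupp, hc, hi, hn]
    rw [h] at this
    simp at this
  · have := Finset.card_le_card hsub
    omega
  · have h5 := bigCH_card _ h
    exact absurd (Finset.eq_of_subset_of_card_le hsub (by omega) ▸ h) hC

lemma not_indep (S : Finset Pt) (hC : S ∈ bigCH) :
    ¬ LinearIndepOn (ZMod 3) col (S : Set Pt) := by
  obtain ⟨x, y, z, w, rfl⟩ := bigCH_word S hC
  have h5 := bigCH_card _ hC
  rw [linearIndepOn_finset_iff]
  intro h
  obtain ⟨i, hi⟩ : (wsupp (kw x y z w)).Nonempty := by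
    rw [← Finset.card_pos]; omega
  have h0 : ∑ p ∈ wsupp (kw x y z w), kw x y z w p • col p = 0 := by
    rw [← kw_kernel x y z w]
    apply Finset.sum_subset (Finset.subset_univ _)
    intro p _ hp
    have : kw x y z w p = 0 := by simpa [wsupp] using hp
    rw [this, zero_smul]
  have := h _ h0 i hi
  simp [wsupp] at hi
  exact hi this

lemma rank_of_indep (S : Finset Pt) (h : LinearIndepOn (ZMod 3) col (S : Set Pt)) :
    Module.finrank (ZMod 3) ↥(Submodule.span (ZMod 3) (col '' ↑S)) = S.card := by
  have := finrank_span_eq_card (R := ZMod 3) (b := fun p : {x // x ∈ S} => col p.1) h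
  rw [Fintype.card_coe] at this
  rw [← this, Set.image_eq_range]
  rfl

lemma rank_mono (S T : Finset Pt) (h : S ⊆ T) :
    Module.finrank (ZMod 3) ↥(Submodule.span (ZMod 3) (col '' ↑S)) ≤
    Module.finrank (ZMod 3) ↥(Submodule.span (ZMod 3) (col '' ↑T)) :=
  Submodule.finrank_mono (Submodule.span_mono (Set.image_mono (by exact_mod_cast h)))

lemma exists_basis (X : Finset Pt) (h : 6 ≤ X.card) :
    ∃ S ⊆ X, S.card = 5 ∧ S ∉ bigCH := by
  obtain ⟨Y, hY, hc⟩ := Finset.exists_subset_card_eq h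
  obtain ⟨a, ha, b, hb, hab⟩ := Finset.one_lt_card.1 (show 1 < Y.card by omega)
  by_contra! hn
  have h1 := hn (Y.erase a) ((Finset.erase_subset _ _).trans hY)
    (by rw [Finset.card_erase_of_mem ha]; omega)
  have h2 := hn (Y.erase b) ((Finset.erase_subset _ _).trans hY)
    (by rw [Finset.card_erase_of_mem hb]; omega)
  have hne : Y.erase a ≠ Y.erase b := by
    intro he
    have : b ∈ Y.erase a := Finset.mem_erase.2 ⟨hab.symm, hb⟩
    rw [he] at this
    simp at this
  have h3 := bigCH_inter _ h1 _ h2 hne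
  have h4 : (Y.erase a).erase b ⊆ Y.erase a ∩ Y.erase b := by
    intro p hp
    simp only [Finset.mem_erase, Finset.mem_inter] at hp ⊢
    tauto
  have h5 := Finset.card_le_card h4
  rw [Finset.card_erase_of_mem (Finset.mem_erase.2 ⟨hab.symm, hb⟩),
    Finset.card_erase_of_mem ha] at h5
  omega

/-- Every 4 columns are linearly independent; a 5-element set of columns is dependent
iff it belongs to `𝒞`; consequently the columns give an `F₃`-linear representation of
the sparse paving matroid of rank 5 with circuit-hyperplane family `𝒞`. -/
theorem stmt_16 :
    (∀ S : Finset Pt, S.card = 4 →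
      LinearIndependent (ZMod 3) (fun p : {x // x ∈ S} => col p.1)) ∧
    (∀ S : Finset Pt, S.card = 5 →
      (¬ LinearIndependent (ZMod 3) (fun p : {x // x ∈ S} => col p.1) ↔ S ∈ bigCH)) ∧
    (∀ X : Finset Pt,
      Module.finrank (ZMod 3) ↥(Submodule.span (ZMod 3) (col '' ↑X)) = bigRank X) := by
  have small : ∀ S : Finset Pt, S.card = 4 → LinearIndepOn (ZMod 3) col (S : Set Pt) := by
    intro S hS
    refine indep_of S (by omega) fun h => ?_
    have := bigCH_card S h
    omega
  refine ⟨small, ?_, ?_⟩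
  · intro S hS
    constructor
    · intro h
      by_contra hC
      exact h (indep_of S hS.le hC)
    · exact not_indep S
  · intro X
    unfold bigRank
    split_ifs with hC
    · have h5 := bigCH_card X hC
      apply le_antisymm
      · have hle := finrank_range_le_card (R := ZMod 3) (fun p : {x // x ∈ X} => col p.1)
        have hne : Fintype.card {x // x ∈ X} ≠
            (Set.range (fun p : {x // x ∈ X} => col p.1)).finrank (ZMod 3) := fun he =>
          not_indep X hC (linearIndependent_iff_card_eq_finrank_span.2 he)
        rw [Fintype.card_coe] at hle hne
        have he : (Set.range (fun p : {x // x ∈ X} => col p.1)) = col '' ↑X := by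
          rw [Set.image_eq_range]
          rfl
        rw [he] at hle hne
        unfold Set.finrank at hle hne
        omega
      · obtain ⟨Y, hY, hc⟩ := Finset.exists_subset_card_eq (show 4 ≤ X.card by omega)
        rw [← hc, ← rank_of_indep Y (small Y hc)]
        exact rank_mono Y X hY
    · by_cases h : X.card ≤ 5
      · rw [rank_of_indep X (indep_of X h hC), min_eq_left h]
      · obtain ⟨S, hS, hc, hn⟩ := exists_basis X (by omega)
        rw [min_eq_right (by omega)]
        apply le_antisymm
        · refine (Submodule.finrank_le _).trans ?_
          simp
        · have := rank_mono S X hS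
          rw [rank_of_indep S (indep_of S hc.le hn), hc] at this
          exact this
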